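/- (Corollary 4, sparse linear regression, prediction.) Suppose Y = Xβ* + W ∈ ℝ^n where β* ∈ ℝ^p has support S* = supp(β*) with |S*| = s* and det(X_{*S*}ᵀX_{*S*}) > 0, and W is sub-Gaussian with parameter ρ. Then for any constants λ, ρ > 0 and any sufficiently small constant δ ∈ (0,1), there exists a constant D_{λ,δ,ρ} > 0 depending only on λ, δ, ρ such that for every D > D_{λ,δ,ρ} there exist constants M, C', C'' > 0 depending only on λ, δ, ρ, D with: E Π( |S| > (1+δ)s* | Y ) ≤ exp(−C' s* log(ep/s*)) and E Π( ‖Xβ − Xβ*‖² > M s* log(ep/s*) | Y ) ≤ exp(−C'' s* log(ep/s*)). -/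

import Mathlib

open MeasureTheory Real Matrix
open scoped ENNReal Classical

/-- Euclidean norm of a finitely-indexed real vector. -/
noncomputable def enr {ι : Type*} [Fintype ι] (v : ι → ℝ) : ℝ :=
  Real.sqrt (∑ i, v i ^ 2)

/-- Euclidean inner product. -/
noncomputable def ipr {ι : Type*} [Fintype ι] (u v : ι → ℝ) : ℝ :=
  ∑ i, u i * v i

/-- Sub-Gaussian condition (2.2): `P(|⟨W,K⟩| > t) ≤ exp(-ρ t²/2)` for every unit vector `K`. -/
def subG {ι Ω : Type*} [Fintype ι] [MeasurableSpace Ω] (P : Measure Ω) (ρ : ℝ)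
    (W : Ω → ι → ℝ) : Prop :=
  ∀ K : ι → ℝ, enr K = 1 → ∀ t : ℝ, 0 < t →
    P {ω | t < |ipr (W ω) K|} ≤ ENNReal.ofReal (Real.exp (-ρ * t ^ 2 / 2))

/-- Determinant of the Gram matrix `AᵀA`. -/
noncomputable def gramDet {N κ : Type*} [Fintype N] [Fintype κ] [DecidableEq κ]
    (A : Matrix N κ ℝ) : ℝ := (Aᵀ * A).det

/-- Generic posterior probability for a structured linear model.
`ι` indexes the models (structures), `κ i` the coordinates of the parameter of model `i`,
`A i` is the matrix of the linear operator `𝒳` of model `i`, `w i` the model-selection prior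
weight (with the Gamma-correction already cancelled against the Laplace normalizing constant),
`emb i` maps a parameter to the object the posterior statement is about, `Y` is the data,
`Sel` restricts the model index and `U` the embedded parameter. -/
noncomputable def gpostP {Θ N ι : Type*} [Fintype N] [Fintype ι]
    {κ : ι → Type*} [∀ i, Fintype (κ i)] [∀ i, DecidableEq (κ i)]
    (w : ι → ℝ) (A : (i : ι) → Matrix N (κ i) ℝ)
    (emb : (i : ι) → (κ i → ℝ) → Θ) (lam : ℝ) (Y : N → ℝ)
    (Sel : Set ι) (U : Set Θ) : ℝ :=
  (∑ i : ι, (if i ∈ Sel then w i else 0) * Real.sqrt (gramDet (A i)) *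
      (lam / Real.sqrt π) ^ Fintype.card (κ i) *
      ∫ Q in {Q : κ i → ℝ | emb i Q ∈ U},
        Real.exp (-(1/2) * (enr fun t => Y t - (A i).mulVec Q t) ^ 2
          - lam * enr ((A i).mulVec Q))) /
  (∑ i : ι, w i * Real.sqrt (gramDet (A i)) *
      (lam / Real.sqrt π) ^ Fintype.card (κ i) *
      ∫ Q : κ i → ℝ,
        Real.exp (-(1/2) * (enr fun t => Y t - (A i).mulVec Q t) ^ 2
          - lam * enr ((A i).mulVec Q)))

/-- The submatrix `X_{*S}` of the columns of `X` indexed by `S`. -/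
noncomputable def colSub {n p : ℕ} (X : Matrix (Fin n) (Fin p) ℝ) (S : Finset (Fin p)) :
    Matrix (Fin n) ↥S ℝ := fun i j => X i j

/-- The coefficient vector `β` with `β_S` on `S` and `β_{S^c} = 0`. -/
noncomputable def sparseVec {p : ℕ} (S : Finset (Fin p)) (Q : ↥S → ℝ) : Fin p → ℝ :=
  fun j => if h : j ∈ S then Q ⟨j, h⟩ else 0

/-- The posterior distribution of the sparse-regression prior: `s` is sampled with weight
proportional to `(Γ(s)/Γ(s/2)) exp(-2Ds log(ep/s))` on `[p]`, `S` uniformly from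
`𝒵̄_s = {S : |S| = s, det(X_{*S}ᵀX_{*S}) > 0}`, and `β_S` from the elliptical Laplace
density `∝ exp(-λ‖X_{*S}β_S‖)` with `β_{S^c} = 0`; the Gaussian pseudo-likelihood
`∝ exp(-½‖Y - Xβ‖²)` is used.  `SS` restricts the selected support `S` and `U` restricts
the coefficient vector `β`.  (The Gamma correction factor has been cancelled against the
Laplace normalizing constant.) -/
noncomputable def slrPost (n p : ℕ) (X : Matrix (Fin n) (Fin p) ℝ) (D lam : ℝ)
    (Y : Fin n → ℝ) (SS : Set (Finset (Fin p))) (U : Set (Fin p → ℝ)) : ℝ :=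
  gpostP
    (fun S : Finset (Fin p) =>
      (if S.Nonempty ∧ 0 < gramDet (colSub X S) then 1 else 0) *
        Real.exp (-2 * D * S.card * Real.log (Real.exp 1 * p / S.card)) *
        ((Finset.univ.filter fun S' : Finset (Fin p) =>
            S'.card = S.card ∧ 0 < gramDet (colSub X S')).card : ℝ)⁻¹)
    (fun S => colSub X S) (fun S Q => sparseVec S Q) lam Y SS U

/-!
A `1/2`-net of the unit sphere in the span of `Xβ*` and the columns of `X_{*S}` has at most
`5^(|S|+1)` points, and on that sphere `⟨W, ·⟩` is at most twice its maximum over the net. A union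
bound over the net and over `S` gives, off an event of probability `exp (-2 s* log (ep/s*))`, the
bound `⟨W, X_{*S}β_S - Xβ*⟩ ≤ 2t ‖X_{*S}β_S - Xβ*‖` for all `S`, with
`t² ≍ |S| log (ep/|S|) + s* log (ep/s*)`.

On this event each model's contribution to the posterior is compared with that of the true model.
The evidence of the true model is bounded below by symmetrizing the integral around `β*`: the noise
then enters only through `cosh ≥ 1`. The evidence of a model `S` is bounded above by completing the
square, which costs a factor `exp ((2t + λ)²)` and gains `exp (-R/8)` on the part where
`‖Xβ - Xβ*‖² ≥ R`. For large `D` the prior penalty `exp (-2D |S| log (ep/|S|))` outweighs these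
costs when `|S| > (1+δ)s*`, and so does the gain when `R` is a large multiple of `s* log (ep/s*)`.
-/

section EuclideanNorm

variable {ι : Type*} [Fintype ι]

lemma enr_eq_norm_toLp (v : ι → ℝ) : enr v = ‖WithLp.toLp 2 v‖ := by
  simp [enr, EuclideanSpace.norm_eq]

lemma inner_toLp_eq_ipr (u v : ι → ℝ) :
    inner ℝ (WithLp.toLp 2 u : EuclideanSpace ℝ ι) (WithLp.toLp 2 v) = ipr u v := by
  simp [ipr, PiLp.inner_apply, mul_comm]

lemma enr_nonneg (v : ι → ℝ) : 0 ≤ enr v := Real.sqrt_nonneg _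

lemma enr_sq (v : ι → ℝ) : enr v ^ 2 = ∑ i, v i ^ 2 :=
  Real.sq_sqrt (Finset.sum_nonneg fun _ _ => sq_nonneg _)

@[fun_prop]
lemma continuous_enr : Continuous (enr : (ι → ℝ) → ℝ) := by
  unfold enr
  fun_prop

lemma enr_neg (v : ι → ℝ) : enr (-v) = enr v := by simp [enr]

lemma enr_add_le (u v : ι → ℝ) : enr (u + v) ≤ enr u + enr v := by
  simpa only [enr_eq_norm_toLp, WithLp.toLp_add] using norm_add_le _ _

lemma enr_sub_rev (u v : ι → ℝ) : enr (u - v) = enr (v - u) := by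
  rw [← enr_neg, neg_sub]

lemma enr_sub_sq (u v : ι → ℝ) : enr (u - v) ^ 2 = enr u ^ 2 - 2 * ipr u v + enr v ^ 2 := by
  simp only [enr_eq_norm_toLp, WithLp.toLp_sub, ← inner_toLp_eq_ipr]
  exact norm_sub_sq_real _ _

lemma ipr_neg_right (u v : ι → ℝ) : ipr u (-v) = -ipr u v := by simp [ipr]

end EuclideanNorm

section SphereNet

variable {E : Type*} [NormedAddCommGroup E]

lemma packingNumber_one_half_le_five_pow_finrank [NormedSpace ℝ E] [FiniteDimensional ℝ E]
    {A : Set E} (hA : A ⊆ Metric.closedBall 0 1) :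
    Metric.packingNumber (1 / 2) A ≤ (5 ^ Module.finrank ℝ E : ℕ) := by
  refine iSup₂_le fun C hCA => iSup_le fun hsep => ?_
  by_contra! hlarge
  obtain ⟨t, htC, ht⟩ := Set.exists_subset_encard_eq (Order.add_one_le_of_lt hlarge)
  have htfin : t.Finite :=
    Set.finite_of_encard_eq_coe (k := 5 ^ Module.finrank ℝ E + 1) (mod_cast ht)
  lift t to Finset E using htfin
  have hcard : (t.image fun v => (2 : ℝ) • v).card ≤ 5 ^ Module.finrank ℝ E := by
    apply Besicovitch.card_le_of_separated
    · simp only [Finset.forall_mem_image, norm_smul, Real.norm_ofNat]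
      intro v hv
      have : ‖v‖ ≤ 1 := by simpa using hA (hCA (htC hv))
      linarith
    · simp only [Finset.forall_mem_image, ← smul_sub, norm_smul, Real.norm_ofNat]
      intro v hv w hw hvw
      have hdist : ((1 / 2 : NNReal) : ℝ≥0∞) < edist v w :=
        hsep (htC hv) (htC hw) (ne_of_apply_ne _ hvw)
      rw [edist_nndist, ENNReal.coe_lt_coe, ← NNReal.coe_lt_coe, coe_nndist, dist_eq_norm] at hdist
      norm_num at hdist
      linarith
  rw [Finset.card_image_of_injective _ (smul_right_injective E two_ne_zero)] at hcard
  rw [Set.encard_coe_eq_coe_finsetCard] at ht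
  norm_cast at ht
  lia

lemma exists_finset_sphere_cover [NormedSpace ℝ E] [FiniteDimensional ℝ E] :
    ∃ T : Finset E, T.card ≤ 5 ^ Module.finrank ℝ E ∧ (∀ u ∈ T, ‖u‖ = 1) ∧
      ∀ v : E, ‖v‖ = 1 → ∃ u ∈ T, ‖v - u‖ ≤ 1 / 2 := by
  have hcov : Metric.coveringNumber (1 / 2) (Metric.sphere (0 : E) 1) ≤
      (5 ^ Module.finrank ℝ E : ℕ) :=
    (Metric.coveringNumber_le_packingNumber _ _).trans
      (packingNumber_one_half_le_five_pow_finrank Metric.sphere_subset_closedBall)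
  obtain ⟨C, hCsphere, hCfin, hCcover, hCcard⟩ :=
    Metric.exists_set_encard_eq_coveringNumber (ne_top_of_le_ne_top (ENat.natCast_ne_top _) hcov)
  lift C to Finset E using hCfin
  rw [← hCcard, Set.encard_coe_eq_coe_finsetCard] at hcov
  refine ⟨C, mod_cast hcov, fun u hu => by simpa using hCsphere hu, fun v hv => ?_⟩
  have hvC := Metric.isCover_iff_subset_iUnion_closedBall.1 hCcover
    (show v ∈ Metric.sphere 0 1 by simpa)
  simpa [dist_eq_norm] using hvC

lemma exists_finset_norm_le_two_mul [InnerProductSpace ℝ E] [FiniteDimensional ℝ E] :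
    ∃ T : Finset E, T.card ≤ 5 ^ Module.finrank ℝ E ∧ (∀ u ∈ T, ‖u‖ = 1) ∧
      ∀ (w : E) (t : ℝ), 0 ≤ t → (∀ u ∈ T, inner ℝ w u ≤ t) → ‖w‖ ≤ 2 * t := by
  obtain ⟨T, hcard, hunit, hcover⟩ := exists_finset_sphere_cover (E := E)
  refine ⟨T, hcard, hunit, fun w t ht hT => ?_⟩
  rcases eq_or_ne w 0 with rfl | hw
  · simpa
  obtain ⟨u, huT, hu⟩ := hcover (‖w‖⁻¹ • w) (norm_smul_inv_norm hw)
  have hself : inner ℝ w (‖w‖⁻¹ • w) = ‖w‖ := by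
    rw [inner_smul_right, real_inner_self_eq_norm_sq]
    field_simp
  have hnear : inner ℝ w (‖w‖⁻¹ • w - u) ≤ ‖w‖ * (1 / 2) :=
    (real_inner_le_norm _ _).trans (mul_le_mul_of_nonneg_left hu (norm_nonneg _))
  rw [inner_sub_right, hself] at hnear
  linarith [hT u huT]

lemma exists_finset_inner_le_two_mul_norm [InnerProductSpace ℝ E] (V : Submodule ℝ E)
    [FiniteDimensional ℝ V] :
    ∃ T : Finset E, T.card ≤ 5 ^ Module.finrank ℝ V ∧ (∀ u ∈ T, ‖u‖ = 1) ∧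
      ∀ (w : E) (t : ℝ), 0 ≤ t → (∀ u ∈ T, inner ℝ w u ≤ t) →
        ∀ v ∈ V, inner ℝ w v ≤ 2 * t * ‖v‖ := by
  obtain ⟨T, hcard, hunit, hT⟩ := exists_finset_norm_le_two_mul (E := V)
  refine ⟨T.map (Function.Embedding.subtype _), by simpa, by simpa using hunit, ?_⟩
  intro w t ht hw v hv
  have hproj (z : V) : inner ℝ (V.orthogonalProjectionOnto w) z = inner ℝ w (z : E) :=
    V.inner_orthogonalProjectionOnto_eq_of_mem_right z w
  have hnorm : ‖V.orthogonalProjectionOnto w‖ ≤ 2 * t :=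
    hT _ t ht fun u hu => (hproj u).trans_le (hw u (Finset.mem_map_of_mem _ hu))
  calc inner ℝ w v = inner ℝ (V.orthogonalProjectionOnto w) ⟨v, hv⟩ := (hproj ⟨v, hv⟩).symm
    _ ≤ ‖V.orthogonalProjectionOnto w‖ * ‖v‖ := real_inner_le_norm _ _
    _ ≤ 2 * t * ‖v‖ := mul_le_mul_of_nonneg_right hnorm (norm_nonneg _)

end SphereNet

section SubGaussian

variable {ι Ω : Type*} [Fintype ι] [MeasurableSpace Ω] {P : Measure Ω} {ρ : ℝ} {W : Ω → ι → ℝ}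

lemma subG.measure_exists_mem_submodule_le (hW : subG P ρ W) (V : Submodule ℝ (ι → ℝ)) {t : ℝ}
    (ht : 0 < t) :
    P {ω | ∃ v ∈ V, 2 * t * enr v < ipr (W ω) v} ≤
      ENNReal.ofReal (5 ^ Module.finrank ℝ V * Real.exp (-ρ * t ^ 2 / 2)) := by
  let e := (WithLp.linearEquiv 2 ℝ (ι → ℝ)).symm
  obtain ⟨T, hcard, hunit, hT⟩ := exists_finset_inner_le_two_mul_norm (V.map e.toLinearMap)
  rw [LinearEquiv.finrank_map_eq] at hcard
  have hsub : {ω | ∃ v ∈ V, 2 * t * enr v < ipr (W ω) v} ⊆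
      ⋃ u ∈ T, {ω | t < |ipr (W ω) u.ofLp|} := by
    rintro ω ⟨v, hv, hlt⟩
    by_contra! hω
    simp only [Set.mem_iUnion, Set.mem_ofPred_eq, not_exists, not_lt] at hω
    have hle := hT (e (W ω)) t ht.le
      (fun u hu => (inner_toLp_eq_ipr (W ω) u.ofLp).trans_le ((le_abs_self _).trans (hω u hu)))
      (e v) (Submodule.mem_map_of_mem hv)
    rw [enr_eq_norm_toLp, ← inner_toLp_eq_ipr] at hlt
    exact hle.not_gt hlt
  calc P {ω | ∃ v ∈ V, 2 * t * enr v < ipr (W ω) v}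
      ≤ ∑ u ∈ T, P {ω | t < |ipr (W ω) u.ofLp|} :=
        (measure_mono hsub).trans (measure_biUnion_finset_le _ _)
    _ ≤ ∑ _u ∈ T, ENNReal.ofReal (Real.exp (-ρ * t ^ 2 / 2)) :=
        Finset.sum_le_sum fun u hu => hW _ (by rw [enr_eq_norm_toLp]; exact hunit u hu) t ht
    _ = ENNReal.ofReal (T.card * Real.exp (-ρ * t ^ 2 / 2)) := by
        rw [Finset.sum_const, nsmul_eq_mul, ENNReal.ofReal_mul (by positivity),
          ENNReal.ofReal_natCast]
    _ ≤ _ := by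
        gcongr
        exact_mod_cast hcard

lemma subG.measure_exists_mulVec_sub_le {κ : Type*} [Fintype κ] (hW : subG P ρ W)
    (A : Matrix ι κ ℝ) (y : ι → ℝ) {t : ℝ} (ht : 0 < t) :
    P {ω | ∃ Q, 2 * t * enr (A *ᵥ Q - y) < ipr (W ω) (A *ᵥ Q - y)} ≤
      ENNReal.ofReal (5 ^ (Fintype.card κ + 1) * Real.exp (-ρ * t ^ 2 / 2)) := by
  let V : Submodule ℝ (ι → ℝ) := LinearMap.range A.mulVecLin ⊔ ℝ ∙ y
  have hmem (Q : κ → ℝ) : A *ᵥ Q - y ∈ V :=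
    Submodule.sub_mem_sup ⟨Q, rfl⟩ (Submodule.mem_span_singleton_self y)
  have hdim : Module.finrank ℝ V ≤ Fintype.card κ + 1 := by
    refine (Submodule.finrank_add_le_finrank_add_finrank _ _).trans (add_le_add ?_ ?_)
    · simpa using LinearMap.finrank_range_le A.mulVecLin
    · simpa using finrank_span_le_card (R := ℝ) ({y} : Set (ι → ℝ))
  calc P {ω | ∃ Q, 2 * t * enr (A *ᵥ Q - y) < ipr (W ω) (A *ᵥ Q - y)}
      ≤ P {ω | ∃ v ∈ V, 2 * t * enr v < ipr (W ω) v} :=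
        measure_mono fun ω ⟨Q, hQ⟩ => ⟨_, hmem Q, hQ⟩
    _ ≤ _ := hW.measure_exists_mem_submodule_le V ht
    _ ≤ _ := by
        gcongr
        norm_num

end SubGaussian

section GaussianIntegral

variable {N κ : Type*} [Fintype N] [Fintype κ]

lemma integrable_exp_neg_mul_enr_sq {b : ℝ} (hb : 0 < b) :
    Integrable fun Q : κ → ℝ => Real.exp (-b * enr Q ^ 2) := by
  simp only [enr_sq, Finset.mul_sum, Real.exp_sum]
  exact Integrable.fintype_prod fun _ => integrable_exp_neg_mul_sq hb

lemma integral_exp_neg_mul_enr_sq (b : ℝ) :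
    ∫ Q : κ → ℝ, Real.exp (-b * enr Q ^ 2) = √(π / b) ^ Fintype.card κ := by
  simp only [enr_sq, Finset.mul_sum, Real.exp_sum]
  rw [integral_fintype_prod_volume_eq_pow fun x : ℝ => Real.exp (-b * x ^ 2), integral_gaussian]

lemma exists_enr_mulVec_sub_le (A : Matrix N κ ℝ) (y : N → ℝ) :
    ∃ Q₀, ∀ Q, enr (A *ᵥ (Q - Q₀)) ≤ enr (A *ᵥ Q - y) := by
  let T : (κ → ℝ) →ₗ[ℝ] EuclideanSpace ℝ N :=
    (WithLp.linearEquiv 2 ℝ (N → ℝ)).symm.toLinearMap ∘ₗ A.mulVecLin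
  let U : Submodule ℝ (EuclideanSpace ℝ N) := LinearMap.range T
  obtain ⟨Q₀, hQ₀⟩ : U.starProjection (WithLp.toLp 2 y) ∈ U := U.starProjection_apply_mem _
  refine ⟨Q₀, fun Q => ?_⟩
  have hproj : U.starProjection (T Q - WithLp.toLp 2 y) = T (Q - Q₀) := by
    rw [map_sub, map_sub, hQ₀, U.starProjection_eq_self_iff.2 ⟨Q, rfl⟩]
  rw [enr_eq_norm_toLp, enr_eq_norm_toLp]
  exact (congrArg norm hproj).ge.trans (U.norm_starProjection_apply_le _)

lemma enr_mulVec_sq (A : Matrix N κ ℝ) (Q : κ → ℝ) :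
    enr (A *ᵥ Q) ^ 2 = Q ⬝ᵥ ((Aᵀ * A) *ᵥ Q) := by
  rw [← Matrix.mulVec_mulVec, Matrix.dotProduct_mulVec, Matrix.vecMul_transpose, enr_sq]
  simp only [dotProduct, sq]

open scoped MatrixOrder in
lemma exists_transpose_mul_self_eq (A : Matrix N κ ℝ) : ∃ B : Matrix κ κ ℝ, Aᵀ * A = Bᵀ * B := by
  classical
  have hA : (Aᵀ * A).PosSemidef := by
    simpa only [conjTranspose_eq_transpose_of_trivial] using posSemidef_conjTranspose_mul_self A
  obtain ⟨B, hB⟩ := CStarAlgebra.nonneg_iff_eq_star_mul_self.1 hA.nonneg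
  exact ⟨B, by simpa only [star_eq_conjTranspose, conjTranspose_eq_transpose_of_trivial] using hB⟩

variable [DecidableEq κ]

lemma exists_square_isometric (A : Matrix N κ ℝ) :
    ∃ B : Matrix κ κ ℝ, |B.det| = √(gramDet A) ∧ ∀ Q, enr (A *ᵥ Q) = enr (B *ᵥ Q) := by
  obtain ⟨B, hB⟩ := exists_transpose_mul_self_eq A
  refine ⟨B, ?_, fun Q => ?_⟩
  · rw [gramDet, hB, det_mul, det_transpose, Real.sqrt_mul_self_eq_abs]
  · rw [← sq_eq_sq₀ (enr_nonneg _) (enr_nonneg _), enr_mulVec_sq, enr_mulVec_sq, hB]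

variable {A : Matrix N κ ℝ}

lemma integrable_comp_enr_mulVec (hA : 0 < gramDet A) {f : ℝ → ℝ}
    (hf : Integrable fun Q : κ → ℝ => f (enr Q)) : Integrable fun Q => f (enr (A *ᵥ Q)) := by
  obtain ⟨B, hdet, hB⟩ := exists_square_isometric A
  have hB0 : B.det ≠ 0 := abs_pos.1 (hdet ▸ Real.sqrt_pos.2 hA)
  simp only [hB]
  have hmap : Integrable (fun Q : κ → ℝ => f (enr Q)) (volume.map (toLin' B)) := by
    rw [Real.map_matrix_volume_pi_eq_smul_volume_pi hB0]
    exact hf.smul_measure ENNReal.ofReal_ne_top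
  exact hmap.comp_measurable (toLin' B).continuous_of_finiteDimensional.measurable

lemma sqrt_gramDet_mul_integral_comp_enr_mulVec (hA : 0 < gramDet A) (f : ℝ → ℝ) :
    √(gramDet A) * ∫ Q, f (enr (A *ᵥ Q)) = ∫ Q : κ → ℝ, f (enr Q) := by
  obtain ⟨B, hdet, hB⟩ := exists_square_isometric A
  have hB0 : B.det ≠ 0 := abs_pos.1 (hdet ▸ Real.sqrt_pos.2 hA)
  have hemb : MeasurableEmbedding (toLin' B) :=
    (toLin' B).continuous_of_finiteDimensional.measurableEmbedding
      (mulVec_injective_of_isUnit ((isUnit_iff_isUnit_det B).2 hB0.isUnit))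
  have hcov := hemb.integral_map (μ := volume) fun Q => f (enr Q)
  rw [Real.map_matrix_volume_pi_eq_smul_volume_pi hB0, integral_smul_measure,
    ENNReal.toReal_ofReal (abs_nonneg _), abs_inv, smul_eq_mul,
    inv_mul_eq_iff_eq_mul₀ (abs_ne_zero.2 hB0)] at hcov
  simpa only [hB, hdet, toLin'_apply] using hcov.symm

lemma integrable_exp_neg_mul_enr_mulVec_sub_sq (hA : 0 < gramDet A) {b : ℝ} (hb : 0 < b)
    (y : N → ℝ) : Integrable fun Q => Real.exp (-b * enr (A *ᵥ Q - y) ^ 2) := by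
  obtain ⟨Q₀, hQ₀⟩ := exists_enr_mulVec_sub_le A y
  have hcentered : Integrable fun Q => Real.exp (-b * enr (A *ᵥ Q) ^ 2) :=
    integrable_comp_enr_mulVec hA (f := fun r => Real.exp (-b * r ^ 2))
      (integrable_exp_neg_mul_enr_sq hb)
  refine (hcentered.comp_sub_right Q₀).mono' (by fun_prop) (.of_forall fun Q => ?_)
  rw [Real.norm_of_nonneg (Real.exp_nonneg _), neg_mul, neg_mul]
  have := enr_nonneg (A *ᵥ (Q - Q₀))
  gcongr
  exact hQ₀ Q

lemma sqrt_gramDet_mul_integral_exp_neg_mul_enr_mulVec_sq (hA : 0 < gramDet A) (b : ℝ) :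
    √(gramDet A) * ∫ Q, Real.exp (-b * enr (A *ᵥ Q) ^ 2) = √(π / b) ^ Fintype.card κ := by
  rw [sqrt_gramDet_mul_integral_comp_enr_mulVec hA fun r => Real.exp (-b * r ^ 2),
    integral_exp_neg_mul_enr_sq]

lemma sqrt_gramDet_mul_integral_exp_neg_mul_enr_mulVec_sub_sq_le (hA : 0 < gramDet A) {b : ℝ}
    (hb : 0 < b) (y : N → ℝ) :
    √(gramDet A) * ∫ Q, Real.exp (-b * enr (A *ᵥ Q - y) ^ 2) ≤ √(π / b) ^ Fintype.card κ := by
  obtain ⟨Q₀, hQ₀⟩ := exists_enr_mulVec_sub_le A y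
  have hcentered : Integrable fun Q => Real.exp (-b * enr (A *ᵥ Q) ^ 2) := by
    simpa only [sub_zero] using integrable_exp_neg_mul_enr_mulVec_sub_sq hA hb 0
  rw [← sqrt_gramDet_mul_integral_exp_neg_mul_enr_mulVec_sq hA b,
    ← integral_sub_right_eq_self (fun Q => Real.exp (-b * enr (A *ᵥ Q) ^ 2)) Q₀]
  refine mul_le_mul_of_nonneg_left (integral_mono
    (integrable_exp_neg_mul_enr_mulVec_sub_sq hA hb y) (hcentered.comp_sub_right Q₀) fun Q => ?_)
    (Real.sqrt_nonneg _)
  simp only [neg_mul]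
  have := enr_nonneg (A *ᵥ (Q - Q₀))
  gcongr
  exact hQ₀ Q

end GaussianIntegral

section Evidence

variable {N κ : Type*} [Fintype N] [Fintype κ]

/-- The Gaussian pseudo-likelihood of the data `Y` at the parameter `Q` of the linear model `A`,
times the elliptical Laplace prior density of `Q`; normalizing constants are left to `evidence`. -/
noncomputable def postKernel (A : Matrix N κ ℝ) (lam : ℝ) (Y : N → ℝ) (Q : κ → ℝ) : ℝ :=
  Real.exp (-(1 / 2) * enr (Y - A *ᵥ Q) ^ 2 - lam * enr (A *ᵥ Q))

lemma postKernel_pos (A : Matrix N κ ℝ) (lam : ℝ) (Y : N → ℝ) (Q : κ → ℝ) :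
    0 < postKernel A lam Y Q := Real.exp_pos _

lemma enr_data_sub_sq (y W z : N → ℝ) :
    enr (y + W - z) ^ 2 = enr W ^ 2 - 2 * ipr W (z - y) + enr (z - y) ^ 2 := by
  rw [← enr_sub_sq]
  congr 2
  abel

lemma le_postKernel_add (A : Matrix N κ ℝ) {lam : ℝ} (hlam : 0 ≤ lam) (W : N → ℝ) (Q₀ h : κ → ℝ) :
    Real.exp (-(1 / 2) * enr W ^ 2 - lam * enr (A *ᵥ Q₀) - lam ^ 2 / 2) *
        (Real.exp (ipr W (A *ᵥ h)) * Real.exp (-1 * enr (A *ᵥ h) ^ 2)) ≤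
      postKernel A lam (A *ᵥ Q₀ + W) (Q₀ + h) := by
  rw [postKernel, ← Real.exp_add, ← Real.exp_add, Real.exp_le_exp, enr_data_sub_sq, mulVec_add,
    add_sub_cancel_left]
  have htriangle := mul_le_mul_of_nonneg_left (enr_add_le (A *ᵥ Q₀) (A *ᵥ h)) hlam
  have hamgm := two_mul_le_add_sq lam (enr (A *ᵥ h))
  linarith

lemma le_postKernel_add_add_postKernel_sub (A : Matrix N κ ℝ) {lam : ℝ} (hlam : 0 ≤ lam)
    (W : N → ℝ) (Q₀ h : κ → ℝ) :
    2 * Real.exp (-(1 / 2) * enr W ^ 2 - lam * enr (A *ᵥ Q₀) - lam ^ 2 / 2) *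
        Real.exp (-1 * enr (A *ᵥ h) ^ 2) ≤
      postKernel A lam (A *ᵥ Q₀ + W) (Q₀ + h) + postKernel A lam (A *ᵥ Q₀ + W) (Q₀ - h) := by
  have hadd := le_postKernel_add A hlam W Q₀ h
  have hsub := le_postKernel_add A hlam W Q₀ (-h)
  rw [mulVec_neg, ipr_neg_right, enr_neg, ← sub_eq_add_neg] at hsub
  set c := Real.exp (-(1 / 2) * enr W ^ 2 - lam * enr (A *ᵥ Q₀) - lam ^ 2 / 2)
  set g := Real.exp (-1 * enr (A *ᵥ h) ^ 2)
  have hcosh : c * g ≤ c * g * Real.cosh (ipr W (A *ᵥ h)) :=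
    le_mul_of_one_le_right (by positivity) (Real.one_le_cosh _)
  rw [Real.cosh_eq] at hcosh
  linarith

lemma postKernel_le (A : Matrix N κ ℝ) {lam : ℝ} (hlam : 0 ≤ lam) {W y : N → ℝ} {Q : κ → ℝ}
    {R τ : ℝ} (hR : R ≤ enr (A *ᵥ Q - y) ^ 2)
    (hτ : ipr W (A *ᵥ Q - y) ≤ τ * enr (A *ᵥ Q - y)) :
    postKernel A lam (y + W) Q ≤
      Real.exp (-(1 / 2) * enr W ^ 2 - lam * enr y + (τ + lam) ^ 2 - R / 8) *
        Real.exp (-(1 / 8) * enr (A *ᵥ Q - y) ^ 2) := by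
  rw [postKernel, ← Real.exp_add, Real.exp_le_exp, enr_data_sub_sq]
  have htriangle : enr y ≤ enr (A *ᵥ Q) + enr (A *ᵥ Q - y) := by
    simpa only [sub_sub_cancel, enr_sub_rev y, add_sub_cancel] using
      enr_add_le (A *ᵥ Q) (y - A *ᵥ Q)
  have hlaplace := mul_le_mul_of_nonneg_left htriangle hlam
  have hamgm := sq_nonneg (enr (A *ᵥ Q - y) / 2 - (τ + lam))
  linarith

variable [DecidableEq κ] {A : Matrix N κ ℝ} {lam : ℝ}

lemma integrable_postKernel (hA : 0 < gramDet A) (hlam : 0 ≤ lam) (Y : N → ℝ) :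
    Integrable (postKernel A lam Y) := by
  have hcont : Continuous (postKernel A lam Y) := by
    unfold postKernel
    fun_prop
  refine (integrable_exp_neg_mul_enr_mulVec_sub_sq hA one_half_pos Y).mono'
    hcont.aestronglyMeasurable (.of_forall fun Q => ?_)
  rw [Real.norm_of_nonneg (postKernel_pos A lam Y Q).le, postKernel, enr_sub_rev, Real.exp_le_exp]
  exact sub_le_self _ (mul_nonneg hlam (enr_nonneg _))

/-- The evidence of the linear model `A` for the data `Y`, restricted to the parameter set `V`: the
integral over `V` of `postKernel`, times the Laplace normalizing constant without its Gamma factor,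
which `gpostP` absorbs into the model weight. -/
noncomputable def evidence (A : Matrix N κ ℝ) (lam : ℝ) (Y : N → ℝ) (V : Set (κ → ℝ)) : ℝ :=
  √(gramDet A) * (lam / √π) ^ Fintype.card κ * ∫ Q in V, postKernel A lam Y Q

lemma evidence_nonneg (A : Matrix N κ ℝ) (hlam : 0 ≤ lam) (Y : N → ℝ) (V : Set (κ → ℝ)) :
    0 ≤ evidence A lam Y V :=
  mul_nonneg (by positivity) (integral_nonneg fun Q => (postKernel_pos A lam Y Q).le)

lemma evidence_le_evidence_univ (hA : 0 < gramDet A) (hlam : 0 ≤ lam) (Y : N → ℝ)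
    (V : Set (κ → ℝ)) : evidence A lam Y V ≤ evidence A lam Y Set.univ := by
  rw [evidence, evidence, setIntegral_univ]
  refine mul_le_mul_of_nonneg_left (setIntegral_le_integral (integrable_postKernel hA hlam Y) ?_)
    (by positivity)
  exact .of_forall fun Q => (postKernel_pos A lam Y Q).le

lemma le_sqrt_gramDet_mul_integral_postKernel (hA : 0 < gramDet A) (hlam : 0 ≤ lam) (W : N → ℝ)
    (Q₀ : κ → ℝ) :
    √π ^ Fintype.card κ *
        Real.exp (-(1 / 2) * enr W ^ 2 - lam * enr (A *ᵥ Q₀) - lam ^ 2 / 2) ≤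
      √(gramDet A) * ∫ Q, postKernel A lam (A *ᵥ Q₀ + W) Q := by
  set c := Real.exp (-(1 / 2) * enr W ^ 2 - lam * enr (A *ᵥ Q₀) - lam ^ 2 / 2)
  set K := postKernel A lam (A *ᵥ Q₀ + W)
  have hK : Integrable K := integrable_postKernel hA hlam _
  have hgauss : Integrable fun h => Real.exp (-1 * enr (A *ᵥ h) ^ 2) := by
    simpa only [sub_zero] using integrable_exp_neg_mul_enr_mulVec_sub_sq hA one_pos 0
  have hsymm : 2 * c * ∫ h, Real.exp (-1 * enr (A *ᵥ h) ^ 2) ≤ 2 * ∫ Q, K Q :=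
    calc 2 * c * ∫ h, Real.exp (-1 * enr (A *ᵥ h) ^ 2)
        ≤ ∫ h, (K (Q₀ + h) + K (Q₀ - h)) := by
          rw [← integral_const_mul]
          exact integral_mono (hgauss.const_mul _)
            ((hK.comp_add_left Q₀).add (hK.comp_sub_left Q₀))
            (le_postKernel_add_add_postKernel_sub A hlam W Q₀)
      _ = 2 * ∫ Q, K Q := by
          rw [integral_add (hK.comp_add_left Q₀) (hK.comp_sub_left Q₀),
            integral_add_left_eq_self K, integral_sub_left_eq_self K, two_mul]
  calc √π ^ Fintype.card κ * c
      = √(gramDet A) * (c * ∫ h, Real.exp (-1 * enr (A *ᵥ h) ^ 2)) := by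
        rw [mul_left_comm, sqrt_gramDet_mul_integral_exp_neg_mul_enr_mulVec_sq hA, div_one,
          mul_comm]
    _ ≤ _ := mul_le_mul_of_nonneg_left (by linarith) (Real.sqrt_nonneg _)

lemma le_evidence_univ (hA : 0 < gramDet A) (hlam : 0 ≤ lam) (W : N → ℝ) (Q₀ : κ → ℝ) :
    lam ^ Fintype.card κ *
        Real.exp (-(1 / 2) * enr W ^ 2 - lam * enr (A *ᵥ Q₀) - lam ^ 2 / 2) ≤
      evidence A lam (A *ᵥ Q₀ + W) Set.univ := by
  set c := Real.exp (-(1 / 2) * enr W ^ 2 - lam * enr (A *ᵥ Q₀) - lam ^ 2 / 2)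
  have hπ : √π ≠ 0 := (Real.sqrt_pos.2 Real.pi_pos).ne'
  calc lam ^ Fintype.card κ * c
      = (lam / √π) ^ Fintype.card κ * (√π ^ Fintype.card κ * c) := by
        rw [← mul_assoc, ← mul_pow, div_mul_cancel₀ _ hπ]
    _ ≤ (lam / √π) ^ Fintype.card κ *
          (√(gramDet A) * ∫ Q, postKernel A lam (A *ᵥ Q₀ + W) Q) :=
        mul_le_mul_of_nonneg_left (le_sqrt_gramDet_mul_integral_postKernel hA hlam W Q₀)
          (by positivity)
    _ = evidence A lam (A *ᵥ Q₀ + W) Set.univ := by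
        rw [evidence, setIntegral_univ, mul_left_comm, mul_assoc]

lemma evidence_le (hA : 0 < gramDet A) (hlam : 0 ≤ lam) {W y : N → ℝ} {V : Set (κ → ℝ)}
    (hV : MeasurableSet V) {R τ : ℝ} (hR : ∀ Q ∈ V, R ≤ enr (A *ᵥ Q - y) ^ 2)
    (hτ : ∀ Q, ipr W (A *ᵥ Q - y) ≤ τ * enr (A *ᵥ Q - y)) :
    evidence A lam (y + W) V ≤ (lam * √8) ^ Fintype.card κ *
      Real.exp (-(1 / 2) * enr W ^ 2 - lam * enr y + (τ + lam) ^ 2 - R / 8) := by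
  set c := Real.exp (-(1 / 2) * enr W ^ 2 - lam * enr y + (τ + lam) ^ 2 - R / 8)
  have hgauss : Integrable fun Q => c * Real.exp (-(1 / 8) * enr (A *ᵥ Q - y) ^ 2) :=
    (integrable_exp_neg_mul_enr_mulVec_sub_sq hA (by norm_num) y).const_mul c
  have hint : ∫ Q in V, postKernel A lam (y + W) Q ≤
      c * ∫ Q, Real.exp (-(1 / 8) * enr (A *ᵥ Q - y) ^ 2) := by
    rw [← integral_const_mul]
    refine (setIntegral_mono_on (integrable_postKernel hA hlam _).integrableOn
      hgauss.integrableOn hV fun Q hQ => postKernel_le A hlam (hR Q hQ) (hτ Q)).trans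
      (setIntegral_le_integral hgauss (.of_forall fun Q => ?_))
    exact (mul_pos (Real.exp_pos _) (Real.exp_pos _)).le
  have hscale : lam / √π * √(π / (1 / 8)) = lam * √8 := by
    rw [div_div_eq_mul_div, div_one, Real.sqrt_mul Real.pi_pos.le]
    field_simp
  calc evidence A lam (y + W) V
      ≤ √(gramDet A) * (lam / √π) ^ Fintype.card κ *
          (c * ∫ Q, Real.exp (-(1 / 8) * enr (A *ᵥ Q - y) ^ 2)) :=
        mul_le_mul_of_nonneg_left hint (by positivity)
    _ = (lam / √π) ^ Fintype.card κ * c *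
          (√(gramDet A) * ∫ Q, Real.exp (-(1 / 8) * enr (A *ᵥ Q - y) ^ 2)) := by ring
    _ ≤ (lam / √π) ^ Fintype.card κ * c * √(π / (1 / 8)) ^ Fintype.card κ :=
        mul_le_mul_of_nonneg_left
          (sqrt_gramDet_mul_integral_exp_neg_mul_enr_mulVec_sub_sq_le hA (by norm_num) y)
          (by positivity)
    _ = (lam * √8) ^ Fintype.card κ * c := by rw [mul_right_comm, ← mul_pow, hscale]

end Evidence

section GenericPosterior

variable {Θ N ι : Type*} [Fintype N] [Fintype ι] {κ : ι → Type*} [∀ i, Fintype (κ i)]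
  [∀ i, DecidableEq (κ i)] {w : ι → ℝ} {A : (i : ι) → Matrix N (κ i) ℝ} {lam : ℝ}

lemma gpostP_eq_sum_evidence_div (w : ι → ℝ) (A : (i : ι) → Matrix N (κ i) ℝ)
    (emb : (i : ι) → (κ i → ℝ) → Θ) (lam : ℝ) (Y : N → ℝ) (Sel : Set ι) (U : Set Θ) :
    gpostP w A emb lam Y Sel U =
      (∑ i, (if i ∈ Sel then w i else 0) * evidence (A i) lam Y (emb i ⁻¹' U)) /
        ∑ i, w i * evidence (A i) lam Y Set.univ := by
  simp only [evidence, setIntegral_univ, ← mul_assoc]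
  rfl

lemma gpostP_nonneg (hw : ∀ i, 0 ≤ w i) (hlam : 0 ≤ lam) (emb : (i : ι) → (κ i → ℝ) → Θ)
    (Y : N → ℝ) (Sel : Set ι) (U : Set Θ) : 0 ≤ gpostP w A emb lam Y Sel U := by
  rw [gpostP_eq_sum_evidence_div]
  refine div_nonneg (Finset.sum_nonneg fun i _ => mul_nonneg ?_ (evidence_nonneg _ hlam _ _))
    (Finset.sum_nonneg fun i _ => mul_nonneg (hw i) (evidence_nonneg _ hlam _ _))
  split_ifs
  exacts [hw i, le_rfl]

lemma gpostP_le_one (hw : ∀ i, 0 ≤ w i) (hA : ∀ i, w i ≠ 0 → 0 < gramDet (A i)) (hlam : 0 ≤ lam)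
    (emb : (i : ι) → (κ i → ℝ) → Θ) (Y : N → ℝ) (Sel : Set ι) (U : Set Θ) :
    gpostP w A emb lam Y Sel U ≤ 1 := by
  rw [gpostP_eq_sum_evidence_div]
  refine div_le_one_of_le₀ (Finset.sum_le_sum fun i _ => ?_)
    (Finset.sum_nonneg fun i _ => mul_nonneg (hw i) (evidence_nonneg _ hlam _ _))
  split_ifs
  · rcases eq_or_ne (w i) 0 with hi | hi
    · simp only [hi, zero_mul, le_refl]
    · exact mul_le_mul_of_nonneg_left (evidence_le_evidence_univ (hA i hi) hlam Y _) (hw i)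
  · rw [zero_mul]
    exact mul_nonneg (hw i) (evidence_nonneg _ hlam _ _)

lemma gpostP_le_of_forall_le (hw : ∀ i, 0 ≤ w i) (hlam : 0 ≤ lam)
    {emb : (i : ι) → (κ i → ℝ) → Θ} {Y : N → ℝ} {Sel : Set ι} {U : Set Θ} {ε d : ℝ} (hε : 0 ≤ ε)
    (hd : 0 ≤ d) {i₀ : ι} (hi₀ : d ≤ w i₀ * evidence (A i₀) lam Y Set.univ) {a : ι → ℝ}
    (ha : ∀ i, 0 ≤ a i) (hsum : ∑ i, a i ≤ 1)
    (hle : ∀ i ∈ Sel, w i * evidence (A i) lam Y (emb i ⁻¹' U) ≤ ε * d * a i) :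
    gpostP w A emb lam Y Sel U ≤ ε := by
  have hnonneg (i : ι) : 0 ≤ w i * evidence (A i) lam Y Set.univ :=
    mul_nonneg (hw i) (evidence_nonneg _ hlam _ _)
  rw [gpostP_eq_sum_evidence_div]
  refine div_le_of_le_mul₀ (Finset.sum_nonneg fun i _ => hnonneg i) hε ?_
  calc ∑ i, (if i ∈ Sel then w i else 0) * evidence (A i) lam Y (emb i ⁻¹' U)
      ≤ ∑ i, ε * d * a i := by
        refine Finset.sum_le_sum fun i _ => ?_
        split_ifs with hi
        · exact hle i hi
        · have := ha i
          rw [zero_mul]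
          positivity
    _ ≤ ε * d := by
        rw [← Finset.mul_sum]
        exact mul_le_of_le_one_right (by positivity) hsum
    _ ≤ ε * ∑ i, w i * evidence (A i) lam Y Set.univ := by
        gcongr
        exact hi₀.trans (Finset.single_le_sum (fun i _ => hnonneg i) (Finset.mem_univ i₀))

end GenericPosterior

section SparseRate

lemma one_add_log_div_self_antitoneOn :
    AntitoneOn (fun x : ℝ => (1 + Real.log x) / x) (Set.Ici 1) := by
  intro x hx y hy hxy
  have hmem {z : ℝ} (hz : z ∈ Set.Ici (1 : ℝ)) : Real.exp 1 * z ∈ Set.Ici (Real.exp 1) :=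
    le_mul_of_one_le_right (Real.exp_nonneg 1) hz
  have hlog {z : ℝ} (hz : z ∈ Set.Ici (1 : ℝ)) :
      (1 + Real.log z) / z = Real.exp 1 * (Real.log (Real.exp 1 * z) / (Real.exp 1 * z)) := by
    have hz0 : z ≠ 0 := (zero_lt_one.trans_le hz).ne'
    rw [Real.log_mul (Real.exp_ne_zero 1) hz0, Real.log_exp]
    field_simp
  simp only [hlog hx, hlog hy]
  exact mul_le_mul_of_nonneg_left (Real.log_div_self_antitoneOn (hmem hx) (hmem hy) (by gcongr))
    (Real.exp_nonneg 1)

lemma choose_le_exp_one_mul_div_pow (n k : ℕ) :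
    (n.choose k : ℝ) ≤ (Real.exp 1 * n / k) ^ k := by
  rcases k.eq_zero_or_pos with rfl | hk
  · simp
  have hfact : (0 : ℝ) < k.factorial := mod_cast k.factorial_pos
  have hexp : (k : ℝ) ^ k ≤ Real.exp 1 ^ k * k.factorial := by
    rw [← Real.exp_nat_mul, mul_one, ← div_le_iff₀ hfact]
    exact Real.pow_div_factorial_le_exp _ k.cast_nonneg k
  calc (n.choose k : ℝ) ≤ n ^ k / k.factorial := Nat.choose_le_pow_div k n
    _ ≤ (Real.exp 1 * n / k) ^ k := by
        rw [div_pow, mul_pow, div_le_div_iff₀ hfact (by positivity), mul_right_comm, mul_comm]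
        gcongr

/-- The minimax prediction rate `s log (ep / s)` over `s`-sparse vectors in `ℝ^p`; it is `0` for
`s = 0`. -/
noncomputable def sparseRate (p s : ℕ) : ℝ := s * Real.log (Real.exp 1 * p / s)

variable {p s t : ℕ}

lemma one_le_log_exp_one_mul_div (hs : 0 < s) (hsp : s ≤ p) :
    1 ≤ Real.log (Real.exp 1 * p / s) := by
  have hs' : (0 : ℝ) < s := mod_cast hs
  have hsp' : (s : ℝ) ≤ p := mod_cast hsp
  have hp' : (0 : ℝ) < p := hs'.trans_le hsp'
  rw [Real.le_log_iff_exp_le (by positivity), le_div_iff₀ hs']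
  gcongr

lemma natCast_le_sparseRate (hsp : s ≤ p) : (s : ℝ) ≤ sparseRate p s := by
  rcases s.eq_zero_or_pos with rfl | hs
  · simp [sparseRate]
  · exact le_mul_of_one_le_right s.cast_nonneg (one_le_log_exp_one_mul_div hs hsp)

lemma sparseRate_nonneg (hsp : s ≤ p) : 0 ≤ sparseRate p s :=
  s.cast_nonneg.trans (natCast_le_sparseRate hsp)

lemma choose_le_exp_sparseRate (hsp : s ≤ p) : (p.choose s : ℝ) ≤ Real.exp (sparseRate p s) := by
  rcases s.eq_zero_or_pos with rfl | hs
  · simp [sparseRate]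
  have : (0 : ℝ) < p := mod_cast hs.trans_le hsp
  rw [sparseRate, Real.exp_nat_mul, Real.exp_log (by positivity)]
  exact choose_le_exp_one_mul_div_pow p s

lemma sparseRate_le_mul_sparseRate {r : ℝ} (hr : 1 ≤ r) (ht : r * t ≤ s) (hsp : s ≤ p) :
    sparseRate p t ≤ (1 + Real.log r) / r * sparseRate p s := by
  have hr0 : 0 < r := one_pos.trans_le hr
  have hlogr := Real.log_nonneg hr
  rcases t.eq_zero_or_pos with rfl | ht0
  · have := sparseRate_nonneg hsp
    simp only [sparseRate, Nat.cast_zero, zero_mul]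
    positivity
  have ht' : (0 : ℝ) < t := mod_cast ht0
  have hs' : (0 : ℝ) < s := (mul_pos hr0 ht').trans_le ht
  have hs0 : 0 < s := mod_cast hs'
  have hp' : (0 : ℝ) < p := mod_cast hs0.trans_le hsp
  have hratio : r ≤ s / t := (le_div_iff₀ ht').2 ht
  have hlog : 0 ≤ Real.log (s / t) := Real.log_nonneg (hr.trans hratio)
  set ℓ := Real.log (Real.exp 1 * p / s) with hℓ
  have hℓ1 : 1 ≤ ℓ := one_le_log_exp_one_mul_div hs0 hsp
  have hsplit : Real.log (Real.exp 1 * p / t) = ℓ + Real.log (s / t) := by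
    rw [hℓ, ← Real.log_mul (by positivity) (by positivity)]
    congr 1
    field_simp
  calc sparseRate p t = t * (ℓ + Real.log (s / t)) := by rw [sparseRate, hsplit]
    _ ≤ t * (ℓ + ℓ * Real.log (s / t)) := by
        gcongr
        exact le_mul_of_one_le_left hlog hℓ1
    _ = (1 + Real.log (s / t)) / (s / t) * sparseRate p s := by
        rw [sparseRate, ← hℓ]
        field_simp
    _ ≤ (1 + Real.log r) / r * sparseRate p s :=
        mul_le_mul_of_nonneg_right (one_add_log_div_self_antitoneOn hr (hr.trans hratio) hratio)
          (sparseRate_nonneg hsp)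

/-- The constant `c` for which `s ≥ (1 + δ) t` forces
`sparseRate p t ≤ (1 - c) * sparseRate p s`. -/
noncomputable def sparsityGap (δ : ℝ) : ℝ := 1 - (1 + Real.log (1 + δ)) / (1 + δ)

lemma sparsityGap_pos {δ : ℝ} (hδ : 0 < δ) : 0 < sparsityGap δ := by
  have := Real.log_lt_sub_one_of_pos (x := 1 + δ) (by linarith) (by linarith)
  rw [sparsityGap, sub_pos, div_lt_one (by linarith)]
  linarith

lemma sparsityGap_le_one {δ : ℝ} (hδ : 0 ≤ δ) : sparsityGap δ ≤ 1 := by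
  have := Real.log_nonneg (x := 1 + δ) (by linarith)
  exact sub_le_self _ (by positivity)

lemma choose_mul_exp_neg_two_mul_sparseRate_le (hsp : s ≤ p) :
    p.choose s * Real.exp (-2 * sparseRate p s) ≤ (1 / 2) ^ s :=
  calc p.choose s * Real.exp (-2 * sparseRate p s)
      ≤ Real.exp (sparseRate p s) * Real.exp (-2 * sparseRate p s) := by
        gcongr
        exact choose_le_exp_sparseRate hsp
    _ = Real.exp (-sparseRate p s) := by
        rw [← Real.exp_add]
        ring_nf
    _ ≤ Real.exp (s * -1) := by
        rw [mul_neg_one]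
        gcongr
        exact natCast_le_sparseRate hsp
    _ = Real.exp (-1) ^ s := Real.exp_nat_mul _ _
    _ ≤ (1 / 2) ^ s := by
        gcongr
        rw [Real.exp_neg, one_div]
        gcongr
        linarith [Real.exp_one_gt_d9]

lemma sum_nonempty_exp_neg_two_mul_sparseRate_le_one (p : ℕ) :
    ∑ S : Finset (Fin p) with S.Nonempty, Real.exp (-2 * sparseRate p S.card) ≤ 1 := by
  have hbycard := Finset.sum_powerset_apply_card
    (fun s => if s = 0 then 0 else Real.exp (-2 * sparseRate p s))
    (x := (Finset.univ : Finset (Fin p)))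
  simp only [Finset.powerset_univ, Finset.card_univ, Fintype.card_fin, Finset.card_eq_zero]
    at hbycard
  calc ∑ S : Finset (Fin p) with S.Nonempty, Real.exp (-2 * sparseRate p S.card)
      = ∑ m ∈ Finset.range p, p.choose (m + 1) * Real.exp (-2 * sparseRate p (m + 1)) := by
        simp only [Finset.sum_filter, Finset.nonempty_iff_ne_empty, ne_eq, ite_not]
        rw [hbycard, Finset.sum_range_succ']
        simp
    _ ≤ ∑ m ∈ Finset.range p, (1 / 2 : ℝ) ^ (m + 1) :=
        Finset.sum_le_sum fun m hm =>
          choose_mul_exp_neg_two_mul_sparseRate_le (Finset.mem_range.1 hm)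
    _ = (∑ m ∈ Finset.range p, (1 / 2 : ℝ) ^ m) * (1 / 2) := by
        simp only [pow_succ, Finset.sum_mul]
    _ ≤ 1 := by linarith [sum_geometric_two_le p]

end SparseRate

section NoiseControl

variable {n p k : ℕ} {Ω : Type*} [MeasurableSpace Ω] {P : Measure Ω} {ρ : ℝ} {W : Ω → Fin n → ℝ}

/-- The level `t` at which, for a single model `S` of size `s`, the bound
`⟨W, X_{*S}β_S - y⟩ ≤ 2t ‖X_{*S}β_S - y‖` fails with probability at most
`exp (-2 sparseRate p s - 2 sparseRate p k)`; here `k` is the true sparsity. -/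
noncomputable def noiseLevel (ρ : ℝ) (p s k : ℕ) : ℝ := √(8 / ρ * (sparseRate p s + sparseRate p k))

lemma noiseLevel_sq (hρ : 0 ≤ ρ) {s : ℕ} (hsp : s ≤ p) (hkp : k ≤ p) :
    noiseLevel ρ p s k ^ 2 = 8 / ρ * (sparseRate p s + sparseRate p k) :=
  Real.sq_sqrt (mul_nonneg (by positivity)
    (add_nonneg (sparseRate_nonneg hsp) (sparseRate_nonneg hkp)))

lemma noiseLevel_pos (hρ : 0 < ρ) {s : ℕ} (hsp : s ≤ p) (hk : 0 < k) (hkp : k ≤ p) :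
    0 < noiseLevel ρ p s k := by
  have hk' : (0 : ℝ) < k := mod_cast hk
  have := sparseRate_nonneg hsp
  have := hk'.trans_le (natCast_le_sparseRate hkp)
  exact Real.sqrt_pos.2 (by positivity)

lemma five_pow_mul_exp_noiseLevel_le (hρ : 0 < ρ) {s : ℕ} (hsp : s ≤ p) (hk : 0 < k)
    (hkp : k ≤ p) :
    5 ^ (s + 1) * Real.exp (-ρ * noiseLevel ρ p s k ^ 2 / 2) ≤
      Real.exp (-2 * sparseRate p k) * Real.exp (-2 * sparseRate p s) := by
  have hfive : (5 : ℝ) ≤ Real.exp 2 := by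
    have := Real.quadratic_le_exp_of_nonneg zero_le_two
    linarith
  have hs := natCast_le_sparseRate hsp
  have hk1 : (1 : ℝ) ≤ k := mod_cast hk
  have hkrate := natCast_le_sparseRate hkp
  have hexponent : -ρ * noiseLevel ρ p s k ^ 2 / 2 = -4 * (sparseRate p s + sparseRate p k) := by
    rw [noiseLevel_sq hρ.le hsp hkp]
    field_simp
    ring
  calc 5 ^ (s + 1) * Real.exp (-ρ * noiseLevel ρ p s k ^ 2 / 2)
      ≤ Real.exp 2 ^ (s + 1) * Real.exp (-4 * (sparseRate p s + sparseRate p k)) := by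
        rw [hexponent]
        gcongr
    _ = Real.exp ((s + 1) * 2 - 4 * (sparseRate p s + sparseRate p k)) := by
        rw [← Real.exp_nat_mul, ← Real.exp_add]
        push_cast
        ring_nf
    _ ≤ Real.exp (-2 * sparseRate p k + -2 * sparseRate p s) :=
        Real.exp_le_exp.2 (by linarith)
    _ = _ := Real.exp_add _ _

lemma subG.measure_exists_colSub_le (hW : subG P ρ W) (hρ : 0 < ρ) (X : Matrix (Fin n) (Fin p) ℝ)
    (y : Fin n → ℝ) (hk : 0 < k) (hkp : k ≤ p) :
    P {ω | ∃ S : Finset (Fin p), S.Nonempty ∧ ∃ Q, 2 * noiseLevel ρ p S.card k *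
        enr (colSub X S *ᵥ Q - y) < ipr (W ω) (colSub X S *ᵥ Q - y)} ≤
      ENNReal.ofReal (Real.exp (-2 * sparseRate p k)) := by
  let E (S : Finset (Fin p)) : Set Ω := {ω | ∃ Q, 2 * noiseLevel ρ p S.card k *
    enr (colSub X S *ᵥ Q - y) < ipr (W ω) (colSub X S *ᵥ Q - y)}
  have hE (S : Finset (Fin p)) : P (E S) ≤ ENNReal.ofReal
      (Real.exp (-2 * sparseRate p k) * Real.exp (-2 * sparseRate p S.card)) := by
    have hsp : S.card ≤ p := card_finset_fin_le S
    refine (hW.measure_exists_mulVec_sub_le (colSub X S) y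
      (noiseLevel_pos hρ hsp hk hkp)).trans (ENNReal.ofReal_le_ofReal ?_)
    rw [Fintype.card_coe]
    exact five_pow_mul_exp_noiseLevel_le hρ hsp hk hkp
  calc P {ω | ∃ S : Finset (Fin p), S.Nonempty ∧ ω ∈ E S}
      ≤ P (⋃ S ∈ Finset.univ.filter Finset.Nonempty, E S) :=
        measure_mono fun ω ⟨S, hS, hω⟩ =>
          Set.mem_biUnion (Finset.mem_filter.2 ⟨Finset.mem_univ S, hS⟩) hω
    _ ≤ ∑ S : Finset (Fin p) with S.Nonempty, ENNReal.ofReal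
          (Real.exp (-2 * sparseRate p k) * Real.exp (-2 * sparseRate p S.card)) :=
        (measure_biUnion_finset_le _ _).trans (Finset.sum_le_sum fun S _ => hE S)
    _ = ENNReal.ofReal (Real.exp (-2 * sparseRate p k) *
          ∑ S : Finset (Fin p) with S.Nonempty, Real.exp (-2 * sparseRate p S.card)) := by
        rw [Finset.mul_sum, ENNReal.ofReal_sum_of_nonneg fun S _ => by positivity]
    _ ≤ _ := ENNReal.ofReal_le_ofReal (mul_le_of_le_one_right (Real.exp_nonneg _)
        (sum_nonempty_exp_neg_two_mul_sparseRate_le_one p))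

end NoiseControl

section SupportPrior

variable {n p : ℕ}

/-- The prior weight of the support `S`: the weight of its size times the uniform probability of `S`
among the supports of that size with invertible Gram matrix. -/
noncomputable def slrWeight (X : Matrix (Fin n) (Fin p) ℝ) (D : ℝ) (S : Finset (Fin p)) : ℝ :=
  (if S.Nonempty ∧ 0 < gramDet (colSub X S) then 1 else 0) *
    Real.exp (-2 * D * S.card * Real.log (Real.exp 1 * p / S.card)) *
    ((Finset.univ.filter fun S' : Finset (Fin p) =>
      S'.card = S.card ∧ 0 < gramDet (colSub X S')).card : ℝ)⁻¹

lemma slrPost_eq_gpostP (X : Matrix (Fin n) (Fin p) ℝ) (D lam : ℝ) (Y : Fin n → ℝ)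
    (SS : Set (Finset (Fin p))) (U : Set (Fin p → ℝ)) :
    slrPost n p X D lam Y SS U = gpostP (slrWeight X D) (colSub X) sparseVec lam Y SS U := rfl

lemma slrWeight_nonneg (X : Matrix (Fin n) (Fin p) ℝ) (D : ℝ) (S : Finset (Fin p)) :
    0 ≤ slrWeight X D S := by
  unfold slrWeight
  positivity

lemma nonempty_and_gramDet_pos_of_slrWeight_ne_zero {X : Matrix (Fin n) (Fin p) ℝ} {D : ℝ}
    {S : Finset (Fin p)} (hS : slrWeight X D S ≠ 0) :
    S.Nonempty ∧ 0 < gramDet (colSub X S) := by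
  by_contra h
  simp [slrWeight, h] at hS

lemma slrWeight_le (X : Matrix (Fin n) (Fin p) ℝ) (D : ℝ) (S : Finset (Fin p)) :
    slrWeight X D S ≤ Real.exp (-2 * D * sparseRate p S.card) := by
  rw [slrWeight, mul_assoc _ (S.card : ℝ), ← sparseRate]
  refine (mul_le_of_le_one_right (by positivity) (Nat.cast_inv_le_one _)).trans ?_
  exact mul_le_of_le_one_left (Real.exp_nonneg _) (by split_ifs <;> norm_num)

lemma le_slrWeight {X : Matrix (Fin n) (Fin p) ℝ} {S : Finset (Fin p)} (hS : S.Nonempty)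
    (hdet : 0 < gramDet (colSub X S)) (D : ℝ) :
    Real.exp (-2 * D * sparseRate p S.card - sparseRate p S.card) ≤ slrWeight X D S := by
  rw [slrWeight, if_pos ⟨hS, hdet⟩, one_mul, mul_assoc _ (S.card : ℝ), ← sparseRate, sub_eq_add_neg,
    Real.exp_add, Real.exp_neg (sparseRate _ _)]
  set T := Finset.univ.filter fun S' : Finset (Fin p) =>
    S'.card = S.card ∧ 0 < gramDet (colSub X S')
  have hST : S ∈ T := by simp [T, hdet]
  have hT : T.card ≤ p.choose S.card := by
    have hsub : T ⊆ Finset.powersetCard S.card Finset.univ := fun S' hS' =>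
      Finset.mem_powersetCard.2 ⟨Finset.subset_univ _, (Finset.mem_filter.1 hS').2.1⟩
    simpa using Finset.card_le_card hsub
  have hTpos : (0 : ℝ) < T.card := mod_cast Finset.card_pos.2 ⟨S, hST⟩
  gcongr
  exact (Nat.cast_le.2 hT).trans (choose_le_exp_sparseRate (card_finset_fin_le S))

lemma mulVec_sparseVec (X : Matrix (Fin n) (Fin p) ℝ) (S : Finset (Fin p)) (Q : S → ℝ) :
    X *ᵥ sparseVec S Q = colSub X S *ᵥ Q := by
  funext i
  simp only [Matrix.mulVec, dotProduct, colSub, sparseVec]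
  rw [← Finset.sum_subset (Finset.subset_univ S) fun j _ hj => by simp [hj],
    ← Finset.sum_coe_sort S]
  simp

lemma mulVec_eq_colSub_mulVec (X : Matrix (Fin n) (Fin p) ℝ) {S : Finset (Fin p)}
    {β : Fin p → ℝ} (hβ : ∀ j ∉ S, β j = 0) : X *ᵥ β = colSub X S *ᵥ fun j => β j := by
  rw [← mulVec_sparseVec]
  congr 1
  funext j
  by_cases hj : j ∈ S
  · simp [sparseVec, hj]
  · simp [sparseVec, hj, hβ j hj]

lemma measurable_sparseVec (S : Finset (Fin p)) : Measurable (sparseVec S) := by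
  refine measurable_pi_lambda _ fun j => ?_
  unfold sparseVec
  split_ifs <;> fun_prop

end SupportPrior

section PosteriorBound

variable {n p : ℕ} {X : Matrix (Fin n) (Fin p) ℝ} {lam ρ D R : ℝ} {S S₀ : Finset (Fin p)}
  {β₀ : Fin p → ℝ}

/-- The constant `B` in `slrPost_le`: a prior penalty difference of
`B (sparseRate p |S| + sparseRate p |S₀|)` outweighs the evidence of `S` relative to that of the
true model `S₀`. -/
noncomputable def evidenceCost (lam ρ : ℝ) : ℝ := 64 / ρ + 5 / 2 * lam ^ 2 + |Real.log lam| + 4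

lemma evidenceCost_pos (lam : ℝ) (hρ : 0 ≤ ρ) : 0 < evidenceCost lam ρ := by
  unfold evidenceCost
  positivity

lemma le_exp_abs_log (hlam : 0 < lam) : lam ≤ Real.exp |Real.log lam| :=
  (Real.log_le_iff_le_exp hlam).1 (le_abs_self _)

lemma exp_neg_abs_log_mul_sparseRate_le_pow (hlam : 0 < lam) {s : ℕ} (hsp : s ≤ p) :
    Real.exp (-(|Real.log lam| * sparseRate p s)) ≤ lam ^ s :=
  calc Real.exp (-(|Real.log lam| * sparseRate p s)) ≤ Real.exp (-(|Real.log lam| * s)) := by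
        gcongr
        exact natCast_le_sparseRate hsp
    _ = Real.exp (-|Real.log lam|) ^ s := by
        rw [← Real.exp_nat_mul, mul_neg, mul_comm]
    _ ≤ lam ^ s := by
        gcongr
        exact (Real.le_log_iff_exp_le hlam).1 (neg_abs_le _)

lemma mul_sqrt_eight_pow_le (hlam : 0 < lam) {s : ℕ} (hsp : s ≤ p) :
    (lam * √8) ^ s ≤ Real.exp ((|Real.log lam| + 2) * sparseRate p s) := by
  have hsqrt : √8 ≤ Real.exp 2 := by
    have : √8 ≤ 3 := Real.sqrt_le_iff.2 ⟨by norm_num, by norm_num⟩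
    linarith [Real.add_one_le_exp (2 : ℝ)]
  calc (lam * √8) ^ s ≤ (Real.exp |Real.log lam| * Real.exp 2) ^ s := by
        gcongr
        exact le_exp_abs_log hlam
    _ = Real.exp ((|Real.log lam| + 2) * s) := by
        rw [← Real.exp_add, ← Real.exp_nat_mul, mul_comm]
    _ ≤ _ := by
        gcongr
        exact natCast_le_sparseRate hsp

lemma le_slrWeight_mul_evidence (hlam : 0 < lam) (D : ℝ) (hS₀ : S₀.Nonempty)
    (hdet : 0 < gramDet (colSub X S₀)) (hβ₀ : ∀ j ∉ S₀, β₀ j = 0) (W : Fin n → ℝ) :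
    Real.exp (-(2 * D + 1 + |Real.log lam|) * sparseRate p S₀.card - lam ^ 2 / 2 -
        1 / 2 * enr W ^ 2 - lam * enr (X *ᵥ β₀)) ≤
      slrWeight X D S₀ * evidence (colSub X S₀) lam (X *ᵥ β₀ + W) Set.univ := by
  rw [mulVec_eq_colSub_mulVec X hβ₀]
  have hevidence := le_evidence_univ hdet hlam.le W fun j => β₀ j
  rw [Fintype.card_coe] at hevidence
  set y := colSub X S₀ *ᵥ fun j => β₀ j
  set L := sparseRate p S₀.card
  calc Real.exp (-(2 * D + 1 + |Real.log lam|) * L - lam ^ 2 / 2 - 1 / 2 * enr W ^ 2 - lam * enr y)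
      = Real.exp (-2 * D * L - L) * (Real.exp (-(|Real.log lam| * L)) *
          Real.exp (-(1 / 2) * enr W ^ 2 - lam * enr y - lam ^ 2 / 2)) := by
        rw [← Real.exp_add, ← Real.exp_add]
        ring_nf
    _ ≤ slrWeight X D S₀ * (lam ^ S₀.card *
          Real.exp (-(1 / 2) * enr W ^ 2 - lam * enr y - lam ^ 2 / 2)) := by
        gcongr
        · exact slrWeight_nonneg X D S₀
        · exact le_slrWeight hS₀ hdet D
        · exact exp_neg_abs_log_mul_sparseRate_le_pow hlam (card_finset_fin_le S₀)
    _ ≤ _ := mul_le_mul_of_nonneg_left hevidence (slrWeight_nonneg X D S₀)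

lemma slrWeight_mul_evidence_le (hlam : 0 < lam) (hρ : 0 ≤ ρ) (D : ℝ) {k : ℕ} (hkp : k ≤ p)
    (hdet : 0 < gramDet (colSub X S)) {V : Set (S → ℝ)} (hV : MeasurableSet V)
    {y W : Fin n → ℝ} (hR : ∀ Q ∈ V, R ≤ enr (colSub X S *ᵥ Q - y) ^ 2)
    (hW : ∀ Q, ipr W (colSub X S *ᵥ Q - y) ≤
      2 * noiseLevel ρ p S.card k * enr (colSub X S *ᵥ Q - y)) :
    slrWeight X D S * evidence (colSub X S) lam (y + W) V ≤
      Real.exp (-2 * D * sparseRate p S.card + (|Real.log lam| + 2) * sparseRate p S.card +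
        64 / ρ * (sparseRate p S.card + sparseRate p k) + 2 * lam ^ 2 - R / 8 -
        1 / 2 * enr W ^ 2 - lam * enr y) := by
  have hSp := card_finset_fin_le S
  have hevidence := evidence_le hdet hlam.le hV hR hW
  rw [Fintype.card_coe] at hevidence
  have hsq : (2 * noiseLevel ρ p S.card k + lam) ^ 2 ≤
      64 / ρ * (sparseRate p S.card + sparseRate p k) + 2 * lam ^ 2 := by
    have hlevel := noiseLevel_sq hρ hSp hkp
    have hadd := add_sq_le (a := 2 * noiseLevel ρ p S.card k) (b := lam)
    calc _ ≤ _ := hadd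
      _ = 8 * noiseLevel ρ p S.card k ^ 2 + 2 * lam ^ 2 := by ring
      _ = _ := by
        rw [hlevel]
        ring
  set g := sparseRate p S.card
  calc slrWeight X D S * evidence (colSub X S) lam (y + W) V
      ≤ Real.exp (-2 * D * g) * (Real.exp ((|Real.log lam| + 2) * g) * Real.exp
          (-(1 / 2) * enr W ^ 2 - lam * enr y + (64 / ρ * (g + sparseRate p k) + 2 * lam ^ 2) -
            R / 8)) := by
        refine mul_le_mul (slrWeight_le X D S) (hevidence.trans ?_)
          (evidence_nonneg _ hlam.le _ _) (Real.exp_nonneg _)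
        gcongr
        exact mul_sqrt_eight_pow_le hlam hSp
    _ = _ := by
        rw [← Real.exp_add, ← Real.exp_add]
        ring_nf

lemma slrPost_le (hlam : 0 < lam) (hρ : 0 ≤ ρ) (hS₀ : S₀.Nonempty)
    (hdet : 0 < gramDet (colSub X S₀)) (hβ₀ : ∀ j ∉ S₀, β₀ j = 0) {W : Fin n → ℝ}
    (hW : ∀ S : Finset (Fin p), S.Nonempty → ∀ Q, ipr W (colSub X S *ᵥ Q - X *ᵥ β₀) ≤
      2 * noiseLevel ρ p S.card S₀.card * enr (colSub X S *ᵥ Q - X *ᵥ β₀))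
    {SS : Set (Finset (Fin p))} {U : Set (Fin p → ℝ)} (hU : MeasurableSet U)
    (hR : ∀ β ∈ U, R ≤ enr (X *ᵥ β - X *ᵥ β₀) ^ 2)
    (hcost : ∀ S ∈ SS, S.Nonempty →
      evidenceCost lam ρ * (sparseRate p S.card + sparseRate p S₀.card) ≤
        2 * D * (sparseRate p S.card - sparseRate p S₀.card) + R / 8) :
    slrPost n p X D lam (X *ᵥ β₀ + W) SS U ≤ Real.exp (-2 * sparseRate p S₀.card) := by
  have hS₀p := card_finset_fin_le S₀
  have hone : 1 ≤ sparseRate p S₀.card :=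
    (Nat.one_le_cast.2 hS₀.card_pos).trans (natCast_le_sparseRate hS₀p)
  rw [slrPost_eq_gpostP]
  refine gpostP_le_of_forall_le (slrWeight_nonneg X D) hlam.le (Real.exp_nonneg _)
    (Real.exp_nonneg _) (le_slrWeight_mul_evidence hlam D hS₀ hdet hβ₀ W)
    (a := fun S => if S.Nonempty then Real.exp (-2 * sparseRate p S.card) else 0)
    (fun S => by positivity) ?_ fun S hS => ?_
  · rw [← Finset.sum_filter]
    exact sum_nonempty_exp_neg_two_mul_sparseRate_le_one p
  rcases eq_or_ne (slrWeight X D S) 0 with hweight | hweight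
  · rw [hweight, zero_mul]
    positivity
  obtain ⟨hSne, hSdet⟩ := nonempty_and_gramDet_pos_of_slrWeight_ne_zero hweight
  refine (slrWeight_mul_evidence_le hlam hρ D hS₀p hSdet (measurable_sparseVec S hU)
    (fun Q hQ => mulVec_sparseVec X S Q ▸ hR _ hQ) (hW S hSne)).trans ?_
  rw [if_pos hSne, ← Real.exp_add, ← Real.exp_add, Real.exp_le_exp]
  have hcostS := hcost S hS hSne
  rw [evidenceCost] at hcostS
  have hlam_sq : lam ^ 2 ≤ lam ^ 2 * (sparseRate p S.card + sparseRate p S₀.card) :=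
    le_mul_of_one_le_right (sq_nonneg _)
      (hone.trans (le_add_of_nonneg_left (sparseRate_nonneg (card_finset_fin_le S))))
  linarith

end PosteriorBound

section PosteriorExpectation

lemma integral_le_exp_neg {Ω : Type*} [MeasurableSpace Ω] {P : Measure Ω} [IsProbabilityMeasure P]
    {f : Ω → ℝ} (hf₀ : ∀ ω, 0 ≤ f ω) (hf₁ : ∀ ω, f ω ≤ 1) {N : Set Ω} {L : ℝ} (hL : 1 ≤ L)
    (hN : P N ≤ ENNReal.ofReal (Real.exp (-2 * L))) (hf : ∀ ω ∉ N, f ω ≤ Real.exp (-2 * L)) :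
    ∫ ω, f ω ∂P ≤ Real.exp (-L) := by
  have hmeas : MeasurableSet (toMeasurable P N) := measurableSet_toMeasurable P N
  have hint : Integrable ((toMeasurable P N).indicator fun _ => (1 : ℝ)) P :=
    (integrable_const 1).indicator hmeas
  have hreal : P.real (toMeasurable P N) ≤ Real.exp (-2 * L) := by
    rw [measureReal_def, measure_toMeasurable]
    exact ENNReal.toReal_le_of_le_ofReal (Real.exp_nonneg _) hN
  calc ∫ ω, f ω ∂P
      ≤ ∫ ω, ((toMeasurable P N).indicator (fun _ => (1 : ℝ)) ω + Real.exp (-2 * L)) ∂P := by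
        refine integral_mono_of_nonneg (.of_forall hf₀) (hint.add (integrable_const _))
          (.of_forall fun ω => ?_)
        by_cases hω : ω ∈ toMeasurable P N
        · simpa only [Set.indicator_of_mem hω] using
            (hf₁ ω).trans (le_add_of_nonneg_right (Real.exp_nonneg _))
        · simpa only [Set.indicator_of_notMem hω, zero_add] using
            hf ω fun h => hω (subset_toMeasurable P N h)
    _ = P.real (toMeasurable P N) + Real.exp (-2 * L) := by
        rw [integral_add hint (integrable_const _), integral_indicator_const _ hmeas]
        simp
    _ ≤ 2 * Real.exp (-2 * L) := by linarith
    _ ≤ Real.exp L * Real.exp (-2 * L) := by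
        gcongr
        linarith [Real.add_one_le_exp L]
    _ = Real.exp (-L) := by
        rw [← Real.exp_add]
        ring_nf

variable {n p : ℕ} {X : Matrix (Fin n) (Fin p) ℝ} {lam ρ δ D R : ℝ} {S₀ : Finset (Fin p)}
  {β₀ : Fin p → ℝ} {Ω : Type*} [MeasurableSpace Ω] {P : Measure Ω} [IsProbabilityMeasure P]
  {W : Ω → Fin n → ℝ}

lemma integral_slrPost_le (hlam : 0 < lam) (hρ : 0 < ρ) (hdet : 0 < gramDet (colSub X S₀))
    (hβ₀ : ∀ j ∉ S₀, β₀ j = 0) (hW : subG P ρ W) {SS : Set (Finset (Fin p))}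
    {U : Set (Fin p → ℝ)} (hU : MeasurableSet U)
    (hR : ∀ β ∈ U, R ≤ enr (X *ᵥ β - X *ᵥ β₀) ^ 2)
    (hcost : ∀ S ∈ SS, S.Nonempty →
      evidenceCost lam ρ * (sparseRate p S.card + sparseRate p S₀.card) ≤
        2 * D * (sparseRate p S.card - sparseRate p S₀.card) + R / 8) :
    ∫ ω, slrPost n p X D lam (X *ᵥ β₀ + W ω) SS U ∂P ≤ Real.exp (-sparseRate p S₀.card) := by
  have hnonneg (ω : Ω) : 0 ≤ slrPost n p X D lam (X *ᵥ β₀ + W ω) SS U :=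
    gpostP_nonneg (slrWeight_nonneg X D) hlam.le _ _ _ _
  have hle_one (ω : Ω) : slrPost n p X D lam (X *ᵥ β₀ + W ω) SS U ≤ 1 :=
    gpostP_le_one (slrWeight_nonneg X D)
      (fun _ hS => (nonempty_and_gramDet_pos_of_slrWeight_ne_zero hS).2) hlam.le _ _ _ _
  have hS₀p := card_finset_fin_le S₀
  rcases S₀.eq_empty_or_nonempty with hempty | hS₀
  · calc ∫ ω, slrPost n p X D lam (X *ᵥ β₀ + W ω) SS U ∂P ≤ ∫ _, (1 : ℝ) ∂P :=
          integral_mono_of_nonneg (.of_forall hnonneg) (integrable_const 1) (.of_forall hle_one)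
      _ = Real.exp (-sparseRate p S₀.card) := by simp [hempty, sparseRate]
  refine integral_le_exp_neg hnonneg hle_one
    ((Nat.one_le_cast.2 hS₀.card_pos).trans (natCast_le_sparseRate hS₀p))
    (hW.measure_exists_colSub_le hρ X (X *ᵥ β₀) hS₀.card_pos hS₀p) fun ω hω => ?_
  refine slrPost_le hlam hρ.le hS₀ hdet hβ₀ (fun S hS Q => ?_) hU hR hcost
  by_contra! hlt
  exact hω ⟨S, hS, Q, hlt⟩

lemma integral_slrPost_card_le (hlam : 0 < lam) (hρ : 0 < ρ) (hδ : 0 < δ)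
    (hD : evidenceCost lam ρ ≤ D * sparsityGap δ) (hdet : 0 < gramDet (colSub X S₀))
    (hβ₀ : ∀ j ∉ S₀, β₀ j = 0) (hW : subG P ρ W) :
    ∫ ω, slrPost n p X D lam (X *ᵥ β₀ + W ω)
        {S | (1 + δ) * (S₀.card : ℝ) < (S.card : ℝ)} Set.univ ∂P ≤
      Real.exp (-sparseRate p S₀.card) := by
  refine integral_slrPost_le (R := 0) hlam hρ hdet hβ₀ hW .univ (fun β _ => sq_nonneg _)
    fun S hS _ => ?_
  have hSp := card_finset_fin_le S
  have hg := sparseRate_nonneg hSp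
  have hgap : sparseRate p S₀.card ≤ (1 - sparsityGap δ) * sparseRate p S.card := by
    rw [sparsityGap, sub_sub_cancel]
    exact sparseRate_le_mul_sparseRate (by linarith) (le_of_lt hS) hSp
  have hB := evidenceCost_pos lam hρ.le
  have hc := sparsityGap_pos hδ
  have hDpos : 0 < D := pos_of_mul_pos_left (hB.trans_le hD) hc.le
  have hrate : sparseRate p S₀.card ≤ sparseRate p S.card :=
    hgap.trans (mul_le_of_le_one_left hg (by linarith))
  calc evidenceCost lam ρ * (sparseRate p S.card + sparseRate p S₀.card)
      ≤ D * sparsityGap δ * (sparseRate p S.card + sparseRate p S.card) := by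
        have := sparseRate_nonneg (card_finset_fin_le S₀)
        gcongr
    _ = 2 * D * (sparsityGap δ * sparseRate p S.card) := by ring
    _ ≤ 2 * D * (sparseRate p S.card - sparseRate p S₀.card) := by
        gcongr
        linarith
    _ ≤ _ := by linarith

lemma integral_slrPost_prediction_le (hlam : 0 < lam) (hρ : 0 < ρ)
    (hD : evidenceCost lam ρ ≤ 2 * D) (hdet : 0 < gramDet (colSub X S₀))
    (hβ₀ : ∀ j ∉ S₀, β₀ j = 0) (hW : subG P ρ W) :
    ∫ ω, slrPost n p X D lam (X *ᵥ β₀ + W ω) Set.univ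
        {β | 8 * (2 * D + evidenceCost lam ρ) * sparseRate p S₀.card <
          enr (X *ᵥ β - X *ᵥ β₀) ^ 2} ∂P ≤
      Real.exp (-sparseRate p S₀.card) := by
  have hU : MeasurableSet {β | 8 * (2 * D + evidenceCost lam ρ) * sparseRate p S₀.card <
      enr (X *ᵥ β - X *ᵥ β₀) ^ 2} := (isOpen_lt (by fun_prop) (by fun_prop)).measurableSet
  refine integral_slrPost_le hlam hρ hdet hβ₀ hW hU (fun β hβ => le_of_lt hβ) fun S _ _ => ?_
  have hrate := mul_le_mul_of_nonneg_right hD (sparseRate_nonneg (card_finset_fin_le S))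
  linarith

end PosteriorExpectation

theorem slr_prediction_general {lam ρ δ : ℝ} (hlam : 0 < lam) (hρ : 0 < ρ) (hδ : 0 < δ) :
    ∃ D₀ > 0, ∀ D > D₀, ∃ M > 0, ∀ {n p : ℕ} (X : Matrix (Fin n) (Fin p) ℝ) (S₀ : Finset (Fin p))
      (β₀ : Fin p → ℝ), 0 < gramDet (colSub X S₀) → (∀ j ∉ S₀, β₀ j = 0) →
    ∀ {Ω : Type*} [MeasurableSpace Ω] (P : Measure Ω) [IsProbabilityMeasure P]
      (W : Ω → Fin n → ℝ), subG P ρ W →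
    ∫ ω, slrPost n p X D lam (X *ᵥ β₀ + W ω)
        {S | (1 + δ) * (S₀.card : ℝ) < (S.card : ℝ)} Set.univ ∂P ≤
      Real.exp (-sparseRate p S₀.card) ∧
    ∫ ω, slrPost n p X D lam (X *ᵥ β₀ + W ω) Set.univ
        {β | M * sparseRate p S₀.card < enr (X *ᵥ β - X *ᵥ β₀) ^ 2} ∂P ≤
      Real.exp (-sparseRate p S₀.card) := by
  have hB := evidenceCost_pos lam hρ.le
  have hc := sparsityGap_pos hδ
  refine ⟨evidenceCost lam ρ / sparsityGap δ, by positivity, fun D hD =>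
    ⟨8 * (2 * D + evidenceCost lam ρ), ?_, fun X S₀ β₀ hdet hβ₀ Ω _ P _ W hW => ⟨?_, ?_⟩⟩⟩
  · have : 0 < D := (div_pos hB hc).trans hD
    positivity
  · exact integral_slrPost_card_le hlam hρ hδ ((div_le_iff₀ hc).1 hD.le) hdet hβ₀ hW
  · have hBD : evidenceCost lam ρ ≤ D :=
      (le_div_self hB.le hc (sparsityGap_le_one hδ.le)).trans hD.le
    exact integral_slrPost_prediction_le hlam hρ (by linarith) hdet hβ₀ hW

/-- Corollary 4 (sparse linear regression, prediction): assumption-free posterior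
contraction at the minimax prediction rate `s* log(ep/s*)`, together with the dimension
bound `|S| ≤ (1+δ)s*` under the posterior. -/
theorem slr_prediction :
    ∀ lam ρ : ℝ, 0 < lam → 0 < ρ →
    ∃ δ₀ : ℝ, 0 < δ₀ ∧ δ₀ ≤ 1 ∧ ∀ δ : ℝ, 0 < δ → δ < δ₀ →
    ∃ D₀ : ℝ, 0 < D₀ ∧ ∀ D : ℝ, D₀ < D →
    ∃ M C' C'' : ℝ, 0 < M ∧ 0 < C' ∧ 0 < C'' ∧
    ∀ (n p : ℕ) (X : Matrix (Fin n) (Fin p) ℝ) (βs : Fin p → ℝ),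
      0 < gramDet (colSub X (Finset.univ.filter fun j => βs j ≠ 0)) →
    ∀ (Ω : Type) (_ : MeasurableSpace Ω) (P : Measure Ω) (_ : IsProbabilityMeasure P)
      (W : Ω → Fin n → ℝ), subG P ρ W →
    (∫ ω, slrPost n p X D lam (fun i => X.mulVec βs i + W ω i)
          {S : Finset (Fin p) |
            (1 + δ) * ((Finset.univ.filter fun j => βs j ≠ 0).card : ℝ) < (S.card : ℝ)}
          Set.univ ∂P
        ≤ Real.exp (-C' * ((Finset.univ.filter fun j => βs j ≠ 0).card : ℝ) *
            Real.log (Real.exp 1 * p /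
              ((Finset.univ.filter fun j => βs j ≠ 0).card : ℝ)))) ∧
    (∫ ω, slrPost n p X D lam (fun i => X.mulVec βs i + W ω i) Set.univ
          {β : Fin p → ℝ |
            M * ((Finset.univ.filter fun j => βs j ≠ 0).card : ℝ) *
                Real.log (Real.exp 1 * p /
                  ((Finset.univ.filter fun j => βs j ≠ 0).card : ℝ))
              < (enr fun i => X.mulVec β i - X.mulVec βs i) ^ 2} ∂P
        ≤ Real.exp (-C'' * ((Finset.univ.filter fun j => βs j ≠ 0).card : ℝ) *
            Real.log (Real.exp 1 * p /
              ((Finset.univ.filter fun j => βs j ≠ 0).card : ℝ)))) := by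
  intro lam ρ hlam hρ
  refine ⟨1, one_pos, le_rfl, fun δ hδ _ => ?_⟩
  obtain ⟨D₀, hD₀, hpost⟩ := slr_prediction_general hlam hρ hδ
  refine ⟨D₀, hD₀, fun D hD => ?_⟩
  obtain ⟨M, hM, hbounds⟩ := hpost D hD
  refine ⟨M, 1, 1, hM, one_pos, one_pos, fun n p X βs hdet Ω _ P _ W hW => ?_⟩
  simp only [mul_assoc, neg_mul, one_mul]
  exact hbounds X _ βs hdet (by simp) P W hW
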